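/- Let f : ℝ → ℝ be twice continuously differentiable, let α ∈ (1,2), and let x, c ∈ ℝ. If f″(t) ≤ L for all t then D^α_c f(x) ≤ (L/Γ(3−α)) · |x−c|^{2−α}; if f″(t) ≥ μ for all t then D^α_c f(x) ≥ (μ/Γ(3−α)) · |x−c|^{2−α}. -/

import Mathlib

/-- The Caputo fractional derivative of order `α ∈ (1,2)` with terminal `c`. -/
noncomputable def caputoHigh (α c : ℝ) (f : ℝ → ℝ) (x : ℝ) : ℝ :=
  (Real.sign (x - c) / Real.Gamma (2 - α)) *
    ∫ t in c..x, deriv (deriv f) t / |x - t| ^ (α - 1)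

/-- Bounds for the weighted integral on `[0, h]`. -/
theorem caputo_aux (g : ℝ → ℝ) (hg : Continuous g) (α h : ℝ) (h1 : 1 < α) (h2 : α < 2)
    (hh : 0 ≤ h) (L μ : ℝ) :
    ((∀ t, g t ≤ L) → ∫ u in (0:ℝ)..h, g u / |u| ^ (α - 1) ≤ L * (h ^ (2 - α) / (2 - α))) ∧
    ((∀ t, μ ≤ g t) → μ * (h ^ (2 - α) / (2 - α)) ≤ ∫ u in (0:ℝ)..h, g u / |u| ^ (α - 1)) := by
  have e : ∫ u in (0:ℝ)..h, g u / |u| ^ (α - 1) = ∫ u in (0:ℝ)..h, g u * u ^ (1 - α) := by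
    refine intervalIntegral.integral_congr fun u hu => ?_
    rw [Set.uIcc_of_le hh] at hu
    beta_reduce
    rw [abs_of_nonneg hu.1, div_eq_mul_inv, ← Real.rpow_neg hu.1, neg_sub]
  have hi : IntervalIntegrable (fun u : ℝ => u ^ (1 - α)) MeasureTheory.volume 0 h :=
    intervalIntegral.intervalIntegrable_rpow' (by linarith)
  have hgi : IntervalIntegrable (fun u : ℝ => g u * u ^ (1 - α)) MeasureTheory.volume 0 h :=
    hi.continuousOn_mul hg.continuousOn
  have hc : ∀ K : ℝ, K * (h ^ (2 - α) / (2 - α)) = ∫ u in (0:ℝ)..h, K * u ^ (1 - α) := by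
    intro K
    rw [intervalIntegral.integral_const_mul, integral_rpow (Or.inl (by linarith)),
      show 1 - α + 1 = 2 - α by ring, Real.zero_rpow (by linarith), sub_zero]
  rw [e, hc, hc]
  constructor
  · intro H
    refine intervalIntegral.integral_mono_on hh hgi (hi.const_mul L) fun u hu => ?_
    exact mul_le_mul_of_nonneg_right (H u) (Real.rpow_nonneg hu.1 _)
  · intro H
    refine intervalIntegral.integral_mono_on hh (hi.const_mul μ) hgi fun u hu => ?_
    exact mul_le_mul_of_nonneg_right (H u) (Real.rpow_nonneg hu.1 _)

/-- Change of variables: the signed integral as an integral over `[0, |x - c|]`. -/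
theorem caputo_cov (g : ℝ → ℝ) (α x c : ℝ) :
    Real.sign (x - c) * ∫ t in c..x, g t / |x - t| ^ (α - 1) =
      ∫ u in (0:ℝ)..|x - c|, g (x - Real.sign (x - c) * u) / |u| ^ (α - 1) := by
  rcases lt_trichotomy (x - c) 0 with h | h | h
  · rw [Real.sign_of_neg h, abs_of_neg h]
    have := intervalIntegral.integral_comp_sub_right (a := c) (b := x)
      (fun u => g (x - (-1) * u) / |u| ^ (α - 1)) x
    rw [sub_self] at this
    rw [neg_sub, intervalIntegral.integral_symm (c - x) 0, ← this, neg_one_mul]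
    congr 1
    refine intervalIntegral.integral_congr fun u _ => ?_
    beta_reduce
    rw [abs_sub_comm]
    congr 2
    ring
  · simp [h]
  · rw [Real.sign_of_pos h, abs_of_pos h]
    have := intervalIntegral.integral_comp_sub_left (a := c) (b := x)
      (fun u => g (x - 1 * u) / |u| ^ (α - 1)) x
    rw [sub_self] at this
    rw [← this, one_mul]
    refine intervalIntegral.integral_congr fun u _ => ?_
    beta_reduce
    congr 2
    ring

/-- bounds on the order-`α ∈ (1,2)` Caputo derivative from bounds on the
second derivative. -/
theorem caputoHigh_bounds (f : ℝ → ℝ) (hf : ContDiff ℝ 2 f) (α : ℝ)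
    (hα : α ∈ Set.Ioo (1 : ℝ) 2) (x c L μ : ℝ) :
    ((∀ t, deriv (deriv f) t ≤ L) →
      caputoHigh α c f x ≤ L / Real.Gamma (3 - α) * |x - c| ^ (2 - α)) ∧
    ((∀ t, μ ≤ deriv (deriv f) t) →
      μ / Real.Gamma (3 - α) * |x - c| ^ (2 - α) ≤ caputoHigh α c f x) := by
  obtain ⟨h1, h2⟩ := hα
  have hg : Continuous (deriv (deriv f)) := by
    have := hf.continuous_iteratedDeriv 2 le_rfl
    rwa [iteratedDeriv_succ, iteratedDeriv_one] at this
  have hp : 0 < 2 - α := by linarith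
  have hG : 0 < Real.Gamma (2 - α) := Real.Gamma_pos_of_pos hp
  have hG3 : Real.Gamma (3 - α) = (2 - α) * Real.Gamma (2 - α) := by
    rw [← Real.Gamma_add_one hp.ne']
    congr 1
    ring
  obtain ⟨A, B⟩ := caputo_aux (fun u => deriv (deriv f) (x - Real.sign (x - c) * u))
    (hg.comp (by fun_prop)) α |x - c| h1 h2 (abs_nonneg _) L μ
  have key : caputoHigh α c f x = (∫ u in (0:ℝ)..|x - c|,
      deriv (deriv f) (x - Real.sign (x - c) * u) / |u| ^ (α - 1)) / Real.Gamma (2 - α) := by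
    rw [← caputo_cov, caputoHigh]
    ring
  have hK : ∀ K : ℝ, K / Real.Gamma (3 - α) * |x - c| ^ (2 - α) =
      K * (|x - c| ^ (2 - α) / (2 - α)) / Real.Gamma (2 - α) := by
    intro K
    rw [hG3]
    field_simp
  rw [key, hK, hK]
  exact ⟨fun H => div_le_div_of_nonneg_right (A fun t => H _) hG.le,
    fun H => div_le_div_of_nonneg_right (B fun t => H _) hG.le⟩
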